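/- arXiv:2602.08721 — 2 statements merged into one kernel-verified Lean document; each statement's English description precedes it below -/
import Mathlib

section
/- With p₀(n) := 205n² − 160n + 32, the series identity ∑_{n≥1} (−1/2^10)^n · ((1)_n)^5 / ((1/2)_n)^5 · [ −(49 − 245n + 320n²)/n^9 + (3 H_n^{(4)} + H_{2n}^{(4)}) p₀(n)/(2 n^5) ] = −ζ(7) holds, where ζ is the Riemann zeta function. -/
/-- The rising factorial (Pochhammer symbol) `(a)ₙ = a(a+1)⋯(a+n-1)`. -/
noncomputable def risingFactorial (a : ℝ) (n : ℕ) : ℝ :=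
  ∏ i ∈ Finset.range n, (a + i)

/-- The generalized harmonic number `H_n^{(s)} = ∑_{k=1}^n 1/k^s`. -/
noncomputable def genHarmonic (s n : ℕ) : ℝ :=
  ∑ k ∈ Finset.range n, 1 / ((k : ℝ) + 1) ^ s

open Filter Topology
open scoped Nat

lemma genHarmonic_succ (s n : ℕ) :
    genHarmonic s (n + 1) = genHarmonic s n + 1 / ((n : ℝ) + 1) ^ s := by
  simp [genHarmonic, Finset.sum_range_succ]

lemma genHarmonic_mono (s : ℕ) : Monotone (genHarmonic s) :=
  monotone_nat_of_le_succ fun n => by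
    rw [genHarmonic_succ]
    exact le_add_of_nonneg_right (by positivity)

lemma genHarmonic_nonneg (s n : ℕ) : 0 ≤ genHarmonic s n :=
  Finset.sum_nonneg fun _ _ => by positivity

lemma genHarmonic_four_le_two (n : ℕ) : genHarmonic 4 n ≤ 2 := by
  suffices h : genHarmonic 4 n ≤ 2 - 2 / ((n : ℝ) + 1) from
    h.trans (sub_le_self _ (by positivity))
  induction n with
  | zero => norm_num [genHarmonic]
  | succ n ih =>
    rw [genHarmonic_succ]
    push_cast
    have h : 1 / ((n : ℝ) + 1) ^ 4 ≤ 2 / ((n : ℝ) + 1) - 2 / ((n : ℝ) + 1 + 1) := by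
      rw [div_sub_div _ _ (by positivity) (by positivity),
        div_le_div_iff₀ (by positivity) (by positivity), ← sub_nonneg]
      ring_nf
      positivity
    linarith

lemma risingFactorial_one (n : ℕ) : risingFactorial 1 n = (n ! : ℝ) := by
  induction n with
  | zero => simp [risingFactorial]
  | succ n ih =>
    rw [risingFactorial, Finset.prod_range_succ, ← risingFactorial, ih, Nat.factorial_succ]
    push_cast
    ring

lemma risingFactorial_half (n : ℕ) :
    risingFactorial (1 / 2) n = ((2 * n)! : ℝ) / (4 ^ n * (n ! : ℝ)) := by
  induction n with
  | zero => simp [risingFactorial]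
  | succ n ih =>
    rw [risingFactorial, Finset.prod_range_succ, ← risingFactorial, ih,
      show 2 * (n + 1) = 2 * n + 1 + 1 by ring, Nat.factorial_succ, Nat.factorial_succ,
      Nat.factorial_succ]
    have := Nat.factorial_pos n
    push_cast
    field_simp
    ring

namespace WZZetaSeven

/-! The expansion to first order in `z` of the WZ pair
`F(n,k) = (-1)ⁿ (n!)²/(2n)! ∏_{m=1}^{n} (m⁴+4z) (3n+2k+2)/2 / ∏_{m=n+k+1}^{2n+k+1} (m⁴-z)`,
`G(n,k) = F(n,k) Q(n,k) / (2(2n+1)(3n+2k+2)((2n+k+2)⁴-z))`, where `Q = Q₀ + z Q₁`. -/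

/-- The hypergeometric kernel at `z = 0`. -/
noncomputable def kernel (n k : ℕ) : ℝ :=
  (-1) ^ n * ((n ! : ℝ) ^ 6 / ((2 * n)! : ℝ)) * (((n + k)! : ℝ) / ((2 * n + k + 1)! : ℝ)) ^ 4

/-- The logarithmic `z`-derivative of the kernel at `z = 0`. -/
noncomputable def logDeriv (n k : ℕ) : ℝ :=
  4 * genHarmonic 4 n + genHarmonic 4 (2 * n + k + 1) - genHarmonic 4 (n + k)

/-- The constant term `Q₀` of the certificate. -/
def certZero (n k : ℝ) : ℝ :=
  77 + 254 * k + 344 * k ^ 2 + 248 * k ^ 3 + 101 * k ^ 4 + 22 * k ^ 5 + 2 * k ^ 6 +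
  (558 + 1526 * k + 1648 * k ^ 2 + 888 * k ^ 3 + 240 * k ^ 4 + 26 * k ^ 5) * n +
  (1667 + 3628 * k + 2928 * k ^ 2 + 1048 * k ^ 3 + 141 * k ^ 4) * n ^ 2 +
  (2628 + 4268 * k + 2288 * k ^ 2 + 408 * k ^ 3) * n ^ 3 +
  (2307 + 2486 * k + 664 * k ^ 2) * n ^ 4 + (1070 + 574 * k) * n ^ 5 + 205 * n ^ 6

/-- The coefficient `Q₁` of `z` in the certificate. -/
def certOne (n k : ℝ) : ℝ :=
  -(17 + 14 * k + 2 * k ^ 2 + 40 * n + 18 * n * k + 25 * n ^ 2)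

/-- The coefficient of `z` in `F`. -/
noncomputable def wzF (n k : ℕ) : ℝ :=
  kernel n k * ((3 * n + 2 * k + 2) / 2) * logDeriv n k

/-- The coefficient of `z` in `G`. -/
noncomputable def wzG (n k : ℕ) : ℝ :=
  kernel n k / (4 * (2 * n + 1)) / (2 * n + k + 2) ^ 4 *
    ((logDeriv n k + 1 / (2 * (n : ℝ) + k + 2) ^ 4) * certZero n k + certOne n k)

lemma kernel_succ_left (n k : ℕ) :
    kernel (n + 1) k = -kernel n k * ((n + 1) ^ 5 / (2 * (2 * n + 1))) *
      ((n + k + 1) / ((2 * n + k + 2) * (2 * n + k + 3))) ^ 4 := by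
  simp only [kernel]
  rw [show 2 * (n + 1) + k + 1 = 2 * n + k + 1 + 1 + 1 by ring,
    show 2 * (n + 1) = 2 * n + 1 + 1 by ring, show n + 1 + k = n + k + 1 by ring]
  simp only [Nat.factorial_succ (2 * n + k + 1 + 1), Nat.factorial_succ (2 * n + k + 1),
    Nat.factorial_succ (2 * n + 1), Nat.factorial_succ (2 * n), Nat.factorial_succ (n + k),
    Nat.factorial_succ n]
  have := Nat.factorial_pos (2 * n)
  have := Nat.factorial_pos (2 * n + k + 1)
  push_cast
  have h1 : (2 * (n : ℝ) + k + 1 + 1) = 2 * n + k + 2 := by ring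
  have h2 : (2 * (n : ℝ) + k + 2 + 1) = 2 * n + k + 3 := by ring
  have h3 : (2 * (n : ℝ) + 1 + 1) = 2 * (n + 1) := by ring
  rw [h1, h2, h3]
  field_simp
  ring

lemma kernel_succ_right (n k : ℕ) :
    kernel n (k + 1) = kernel n k * ((n + k + 1) / (2 * n + k + 2)) ^ 4 := by
  simp only [kernel]
  rw [show 2 * n + (k + 1) + 1 = 2 * n + k + 1 + 1 by ring, ← add_assoc n k 1]
  simp only [Nat.factorial_succ (2 * n + k + 1), Nat.factorial_succ (n + k)]
  have := Nat.factorial_pos (2 * n)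
  have := Nat.factorial_pos (2 * n + k + 1)
  push_cast
  have h1 : (2 * (n : ℝ) + k + 1 + 1) = 2 * n + k + 2 := by ring
  rw [h1]
  field_simp

lemma logDeriv_succ_left (n k : ℕ) :
    logDeriv (n + 1) k = logDeriv n k + 4 / (n + 1) ^ 4 + 1 / (2 * n + k + 2) ^ 4 +
      1 / (2 * n + k + 3) ^ 4 - 1 / (n + k + 1) ^ 4 := by
  simp only [logDeriv]
  rw [show 2 * (n + 1) + k + 1 = 2 * n + k + 1 + 1 + 1 by ring,
    show n + 1 + k = n + k + 1 by ring]
  simp only [genHarmonic_succ 4 (2 * n + k + 1 + 1), genHarmonic_succ 4 (2 * n + k + 1),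
    genHarmonic_succ 4 (n + k), genHarmonic_succ 4 n]
  push_cast
  ring

lemma logDeriv_succ_right (n k : ℕ) :
    logDeriv n (k + 1) = logDeriv n k + 1 / (2 * n + k + 2) ^ 4 - 1 / (n + k + 1) ^ 4 := by
  simp only [logDeriv]
  rw [show 2 * n + (k + 1) + 1 = 2 * n + k + 1 + 1 by ring, ← add_assoc n k 1]
  simp only [genHarmonic_succ 4 (2 * n + k + 1), genHarmonic_succ 4 (n + k)]
  push_cast
  ring

/-- The WZ equation, multiplied out, at order `z⁰`. -/
lemma cert_zero_eq (n k : ℝ) :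
    -(n + 1) ^ 5 * (3 * n + 2 * k + 5) * (n + k + 1) ^ 4 -
      2 * (2 * n + 1) * (3 * n + 2 * k + 2) * (2 * n + k + 2) ^ 4 * (2 * n + k + 3) ^ 4 =
    certZero n (k + 1) * (n + k + 1) ^ 4 - certZero n k * (2 * n + k + 3) ^ 4 := by
  unfold certZero
  ring

/-- The WZ equation, multiplied out, at order `z¹`. -/
lemma cert_one_eq (n k : ℝ) :
    -(n + 1) * (3 * n + 2 * k + 5) * (4 * (n + k + 1) ^ 4 - (n + 1) ^ 4) +
      2 * (2 * n + 1) * (3 * n + 2 * k + 2) * ((2 * n + k + 2) ^ 4 + (2 * n + k + 3) ^ 4) =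
    certOne n (k + 1) * (n + k + 1) ^ 4 - certZero n (k + 1) -
      (certOne n k * (2 * n + k + 3) ^ 4 - certZero n k) := by
  unfold certZero certOne
  ring

lemma wzF_sub_wzF (n k : ℕ) :
    wzF (n + 1) k - wzF n k = wzG n (k + 1) - wzG n k := by
  simp only [wzF, wzG, kernel_succ_left, kernel_succ_right, logDeriv_succ_left,
    logDeriv_succ_right]
  push_cast
  have h0 := cert_zero_eq n k
  have h1 := cert_one_eq n k
  generalize kernel n k = W
  generalize logDeriv n k = L
  generalize certZero (n : ℝ) (k + 1) = P at *
  generalize certOne (n : ℝ) (k + 1) = R at *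
  generalize certZero (n : ℝ) k = P' at *
  generalize certOne (n : ℝ) k = R' at *
  rw [show 2 * (n : ℝ) + (k + 1) + 2 = 2 * n + k + 3 by ring,
    show 3 * ((n : ℝ) + 1) + 2 * k + 2 = 3 * n + 2 * k + 5 by ring]
  have hA : (n : ℝ) + k + 1 ≠ 0 := by positivity
  have hB : 2 * (n : ℝ) + k + 2 ≠ 0 := by positivity
  have hD : 2 * (n : ℝ) + k + 3 ≠ 0 := by positivity
  have hE : 2 * (n : ℝ) + 1 ≠ 0 := by positivity
  have hN : (n : ℝ) + 1 ≠ 0 := by positivity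
  generalize (n : ℝ) + k + 1 = A at *
  generalize 2 * (n : ℝ) + k + 2 = B at *
  generalize 2 * (n : ℝ) + k + 3 = D at *
  generalize 2 * (n : ℝ) + 1 = E at *
  generalize 3 * (n : ℝ) + 2 * k + 2 = S at *
  generalize 3 * (n : ℝ) + 2 * k + 5 = T at *
  generalize (n : ℝ) + 1 = N at *
  apply sub_eq_zero.mp
  have e : (W / (4 * E) / (B ^ 4 * D ^ 4)) *
      ((L + 1 / B ^ 4 + 1 / D ^ 4) * ((-N ^ 5 * T * A ^ 4 - 2 * E * S * B ^ 4 * D ^ 4) -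
        (P * A ^ 4 - P' * D ^ 4)) +
       ((-N * T * (4 * A ^ 4 - N ^ 4) + 2 * E * S * (B ^ 4 + D ^ 4)) -
        (R * A ^ 4 - P - (R' * D ^ 4 - P')))) = 0 := by
    rw [h0, h1]; ring
  rw [← e]
  field_simp
  ring

lemma abs_kernel_le (n k : ℕ) : |kernel n k| ≤ 1 / (2 * n + k + 1) ^ 4 := by
  have h1 : (n ! : ℝ) * n ! ≤ (2 * n)! := by
    rw [two_mul]
    exact_mod_cast Nat.le_of_dvd (Nat.factorial_pos _)
      (Nat.factorial_mul_factorial_dvd_factorial_add n n)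
  have h2 : (n ! : ℝ) * (n + k)! ≤ (2 * n + k)! := by
    rw [two_mul, add_assoc]
    exact_mod_cast Nat.le_of_dvd (Nat.factorial_pos _)
      (Nat.factorial_mul_factorial_dvd_factorial_add n (n + k))
  have p1 : (0 : ℝ) < (2 * n)! := by positivity
  have p2 : (0 : ℝ) < (2 * n + k)! := by positivity
  have e : |kernel n k| = ((n ! : ℝ) * n ! / (2 * n)!) *
      ((n ! : ℝ) * (n + k)! / (2 * n + k)!) ^ 4 * (1 / (2 * n + k + 1) ^ 4) := by
    rw [kernel, Nat.factorial_succ (2 * n + k), abs_mul, abs_mul, abs_pow, abs_neg, abs_one,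
      one_pow, abs_of_nonneg (by positivity), abs_of_nonneg (by positivity)]
    push_cast
    field_simp
  rw [e]
  refine mul_le_of_le_one_left (by positivity) (mul_le_one₀ ?_ (by positivity) ?_)
  · exact (div_le_one p1).2 h1
  · exact pow_le_one₀ (by positivity) ((div_le_one p2).2 h2)

lemma logDeriv_nonneg (n k : ℕ) : 0 ≤ logDeriv n k := by
  have h1 := genHarmonic_nonneg 4 n
  have h2 := genHarmonic_mono 4 (show n + k ≤ 2 * n + k + 1 by omega)
  unfold logDeriv
  linarith

lemma logDeriv_le (n k : ℕ) : logDeriv n k ≤ 10 := by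
  have h1 := genHarmonic_four_le_two n
  have h2 := genHarmonic_four_le_two (2 * n + k + 1)
  have h3 := genHarmonic_nonneg 4 (n + k)
  unfold logDeriv
  linarith

lemma abs_wzF_le (n k : ℕ) : |wzF n k| ≤ 10 / (n + 1) * (1 / ((k : ℝ) + 1) ^ 2) := by
  have hL := logDeriv_le n k
  have hL0 := logDeriv_nonneg n k
  rw [wzF, abs_mul, abs_mul, abs_of_nonneg hL0,
    abs_of_nonneg (show (0 : ℝ) ≤ (3 * n + 2 * k + 2) / 2 by positivity)]
  calc |kernel n k| * ((3 * n + 2 * k + 2) / 2) * logDeriv n k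
      ≤ 1 / (2 * n + k + 1) ^ 4 * (2 * n + k + 1) * 10 := by
        gcongr
        · exact abs_kernel_le n k
        · have : (0 : ℝ) ≤ n := by positivity
          linarith
    _ = 10 / (2 * n + k + 1) * (1 / (2 * (n : ℝ) + k + 1) ^ 2) := by field_simp
    _ ≤ 10 / (n + 1) * (1 / ((k : ℝ) + 1) ^ 2) := by
        have h1 : (0 : ℝ) ≤ n := by positivity
        have h2 : (0 : ℝ) ≤ k := by positivity
        gcongr <;> linarith

lemma certZero_le (n k : ℕ) : certZero n k ≤ 4 * (2 * n + k + 2) ^ 6 := by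
  rw [← sub_nonneg]
  unfold certZero
  ring_nf
  positivity

lemma abs_certOne_le (n k : ℕ) : |certOne n k| ≤ 7 * (2 * n + k + 2) ^ 6 := by
  have h : |certOne n k| ≤ 7 * (2 * n + k + 2) ^ 2 := by
    rw [certOne, abs_neg, abs_of_nonneg (by positivity), ← sub_nonneg]
    ring_nf
    positivity
  have h1 : (1 : ℝ) ≤ 2 * n + k + 2 := by
    have h1 : (0 : ℝ) ≤ n := by positivity
    have h2 : (0 : ℝ) ≤ k := by positivity
    linarith
  exact h.trans (by gcongr; norm_num)

lemma abs_wzG_le (n k : ℕ) : |wzG n k| ≤ 60 / (2 * n + k + 1) ^ 2 := by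
  have hn : (0 : ℝ) ≤ n := by positivity
  have hk : (0 : ℝ) ≤ k := by positivity
  have hP : 0 ≤ certZero n k := by
    unfold certZero
    positivity
  have hL0 := logDeriv_nonneg n k
  have hL : logDeriv n k + 1 / (2 * (n : ℝ) + k + 2) ^ 4 ≤ 11 := by
    have h : 1 / (2 * (n : ℝ) + k + 2) ^ 4 ≤ 1 :=
      (div_le_one (by positivity)).2 (one_le_pow₀ (by linarith))
    linarith [logDeriv_le n k]
  have hnum : |(logDeriv n k + 1 / (2 * (n : ℝ) + k + 2) ^ 4) * certZero n k + certOne n k| ≤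
      60 * (2 * (n : ℝ) + k + 2) ^ 6 := by
    calc _ ≤ (logDeriv n k + 1 / (2 * (n : ℝ) + k + 2) ^ 4) * certZero n k + |certOne n k| := by
          refine (abs_add_le _ _).trans_eq ?_
          rw [abs_of_nonneg (mul_nonneg (by positivity) hP)]
      _ ≤ 11 * (4 * (2 * n + k + 2) ^ 6) + 7 * (2 * n + k + 2) ^ 6 := by
          gcongr
          · exact certZero_le n k
          · exact abs_certOne_le n k
      _ ≤ 60 * (2 * n + k + 2) ^ 6 := by
          have : (0 : ℝ) ≤ (2 * n + k + 2) ^ 6 := by positivity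
          linarith
  rw [wzG, abs_mul, abs_div, abs_div,
    abs_of_nonneg (show (0 : ℝ) ≤ 4 * (2 * n + 1) by positivity),
    abs_of_nonneg (show (0 : ℝ) ≤ (2 * n + k + 2) ^ 4 by positivity)]
  calc |kernel n k| / (4 * (2 * (n : ℝ) + 1)) / (2 * (n : ℝ) + k + 2) ^ 4 * _
      ≤ 1 / (2 * (n : ℝ) + k + 1) ^ 4 / 4 / (2 * (n : ℝ) + k + 2) ^ 4 * (60 * (2 * (n : ℝ) + k + 2) ^ 6) := by
        gcongr
        · exact abs_kernel_le n k
        · linarith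
    _ = 15 / (2 * (n : ℝ) + k + 1) ^ 4 * (2 * (n : ℝ) + k + 2) ^ 2 := by
        field_simp
        norm_num
    _ ≤ 15 / (2 * (n : ℝ) + k + 1) ^ 4 * (2 * (2 * (n : ℝ) + k + 1)) ^ 2 := by
        gcongr
        linarith
    _ = 60 / (2 * (n : ℝ) + k + 1) ^ 2 := by
        field_simp
        norm_num

lemma summable_one_div_add_one_sq : Summable fun k : ℕ => 1 / ((k : ℝ) + 1) ^ 2 := by
  have h := (summable_nat_add_iff 1).2 (Real.summable_one_div_nat_pow.2 one_lt_two)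
  simpa using h

lemma summable_wzF (n : ℕ) : Summable (wzF n) :=
  Summable.of_norm_bounded (summable_one_div_add_one_sq.mul_left (10 / ((n : ℝ) + 1)))
    (abs_wzF_le n)

lemma tendsto_tsum_wzF : Tendsto (fun n => ∑' k, wzF n k) atTop (𝓝 0) := by
  refine squeeze_zero_norm (a := fun n : ℕ =>
    10 * (∑' k : ℕ, 1 / ((k : ℝ) + 1) ^ 2) * (1 / ((n : ℝ) + 1))) (fun n => ?_) ?_
  · refine (tsum_of_norm_bounded
      (summable_one_div_add_one_sq.mul_left (10 / ((n : ℝ) + 1))).hasSum (abs_wzF_le n)).trans_eq ?_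
    rw [tsum_mul_left]
    ring
  · simpa only [mul_zero] using (tendsto_one_div_add_atTop_nhds_zero_nat (𝕜 := ℝ)).const_mul
      (10 * (∑' k : ℕ, 1 / ((k : ℝ) + 1) ^ 2))

lemma tendsto_wzG (n : ℕ) : Tendsto (wzG n) atTop (𝓝 0) := by
  refine squeeze_zero_norm (a := fun k : ℕ => 60 * (1 / ((k : ℝ) + 1))) (fun k => ?_) ?_
  · refine (abs_wzG_le n k).trans ?_
    rw [mul_one_div]
    have hn : (0 : ℝ) ≤ n := by positivity
    have hk : (0 : ℝ) ≤ k := by positivity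
    gcongr
    nlinarith
  · simpa using (tendsto_one_div_add_atTop_nhds_zero_nat (𝕜 := ℝ)).const_mul (60 : ℝ)

lemma wzG_zero_right (n : ℕ) : wzG n 0 = ∑' k, wzF n k - ∑' k, wzF (n + 1) k := by
  have h1 := ((summable_wzF (n + 1)).hasSum.sub (summable_wzF n).hasSum).tendsto_sum_nat
  simp only [wzF_sub_wzF, Finset.sum_range_sub] at h1
  have h2 := tendsto_nhds_unique h1 ((tendsto_wzG n).sub_const (wzG n 0))
  linarith

lemma tsum_wzG_zero_right : ∑' n, wzG n 0 = ∑' k, wzF 0 k := by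
  have hs : Summable fun n => wzG n 0 := by
    refine Summable.of_norm_bounded (summable_one_div_add_one_sq.mul_left 60) fun n => ?_
    refine (abs_wzG_le n 0).trans ?_
    rw [mul_one_div]
    have hn : (0 : ℝ) ≤ n := by positivity
    push_cast
    gcongr
    linarith
  refine tendsto_nhds_unique hs.hasSum.tendsto_sum_nat ?_
  have h := tendsto_tsum_wzF.const_sub (∑' k, wzF 0 k)
  rw [sub_zero] at h
  refine h.congr fun N => ?_
  simp only [wzG_zero_right, Finset.sum_range_sub']

lemma wzF_zero_left (k : ℕ) : wzF 0 k = 1 / ((k : ℝ) + 1) ^ 7 := by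
  have := Nat.factorial_pos k
  simp only [wzF, kernel, logDeriv, mul_zero, zero_add, Nat.factorial_succ, genHarmonic_succ]
  simp only [genHarmonic]
  push_cast
  field_simp
  simp
  ring

lemma summand_eq_neg_wzG (n : ℕ) :
    (-1 / 2 ^ 10 : ℝ) ^ (n + 1) * (risingFactorial 1 (n + 1)) ^ 5 /
        (risingFactorial (1 / 2) (n + 1)) ^ 5 *
        (-(49 - 245 * ((n : ℝ) + 1) + 320 * ((n : ℝ) + 1) ^ 2) / ((n : ℝ) + 1) ^ 9 +
          (3 * genHarmonic 4 (n + 1) + genHarmonic 4 (2 * (n + 1))) *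
            (205 * ((n : ℝ) + 1) ^ 2 - 160 * ((n : ℝ) + 1) + 32) /
            (2 * ((n : ℝ) + 1) ^ 5)) = -wzG n 0 := by
  have e4 : ((4 : ℝ) ^ (n + 1)) ^ 5 = (2 ^ 10) ^ (n + 1) := by
    rw [← pow_mul, mul_comm, pow_mul]
    norm_num
  have e : (-1 / 2 ^ 10 : ℝ) ^ (n + 1) * (risingFactorial 1 (n + 1)) ^ 5 /
      (risingFactorial (1 / 2) (n + 1)) ^ 5 =
      -kernel n 0 * (n + 1) ^ 5 / (2 ^ 5 * (2 * n + 1)) := by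
    rw [risingFactorial_one, risingFactorial_half, div_pow, div_pow, mul_pow, e4, kernel,
      show 2 * (n + 1) = 2 * n + 1 + 1 by ring]
    simp only [add_zero, Nat.factorial_succ]
    have h1 := Nat.factorial_pos n
    have h2 := Nat.factorial_pos (2 * n)
    push_cast
    rw [show (2 * (n : ℝ) + 1 + 1) = 2 * (n + 1) by ring]
    field_simp
    ring
  rw [e, wzG, logDeriv, show 2 * (n + 1) = 2 * n + 1 + 1 by ring]
  simp only [genHarmonic_succ 4 n, genHarmonic_succ 4 (2 * n + 1), certZero, certOne, add_zero]
  push_cast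
  rw [show (2 * (n : ℝ) + 1 + 1) = 2 * (n + 1) by ring,
    show (2 * (n : ℝ) + 0 + 2) = 2 * (n + 1) by ring]
  field_simp
  ring

end WZZetaSeven

/-- With `p₀(n) = 205n²−160n+32`:
`∑_{n≥1} (−1/2^10)^n (1)ₙ^5/(1/2)ₙ^5 [ −(49−245n+320n²)/n^9 + (3H_n^{(4)} + H_{2n}^{(4)})p₀(n)/(2n^5) ]
  = −ζ(7)`. -/
theorem wz_zeta7_series :
    ∑' n : ℕ, ((((-1 / 2 ^ 10 : ℝ) ^ (n + 1) * (risingFactorial 1 (n + 1)) ^ 5 /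
        (risingFactorial (1 / 2) (n + 1)) ^ 5 *
        (-(49 - 245 * ((n : ℝ) + 1) + 320 * ((n : ℝ) + 1) ^ 2) / ((n : ℝ) + 1) ^ 9 +
          (3 * genHarmonic 4 (n + 1) + genHarmonic 4 (2 * (n + 1))) *
            (205 * ((n : ℝ) + 1) ^ 2 - 160 * ((n : ℝ) + 1) + 32) /
            (2 * ((n : ℝ) + 1) ^ 5)) : ℝ)) : ℂ)
      = -riemannZeta 7 := by
  simp only [WZZetaSeven.summand_eq_neg_wzG]
  rw [← Complex.ofReal_tsum, tsum_neg, WZZetaSeven.tsum_wzG_zero_right]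
  have h := zeta_eq_tsum_one_div_nat_add_one_cpow (s := 7) (by norm_num)
  simp only [WZZetaSeven.wzF_zero_left]
  rw [h, Complex.ofReal_neg, Complex.ofReal_tsum]
  congr 2
  ext k
  push_cast
  norm_cast
end

section
/- The series identity ∑_{n≥1} (−1/27)^n · ((1)_n)^2 / ((1/3)_n (2/3)_n) · (3 − 18n + 28n²)/(n⁴ (2n−1)³) = −π⁴/45 holds. -/
namespace PiFourSeries

/-- The hypergeometric weight `(−1/27)ⁿ (1)ₙ² / ((1/3)ₙ (2/3)ₙ)`. -/
noncomputable def weight (n : ℕ) : ℝ :=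
  (-1 / 27 : ℝ) ^ n * (risingFactorial 1 n) ^ 2 /
    (risingFactorial (1 / 3) n * risingFactorial (2 / 3) n)

/-- The beta value `k! (2n)! / (2n+k+1)!`. -/
noncomputable def betaValue (n k : ℕ) : ℝ :=
  (k.factorial * (2 * n).factorial : ℝ) / (2 * n + k + 1).factorial

/-- The harmonic difference `(H_{n+k} - H_n) - (H_{2n+k} - H_{2n})`. -/
noncomputable def harmonicDiff (n k : ℕ) : ℝ :=
  ∑ i ∈ Finset.range k, (1 / ((n : ℝ) + i + 1) - 1 / (2 * (n : ℝ) + i + 1))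

/-- Numerator of the certificate for the factor of `harmonicDiff`. -/
noncomputable def harmonicNum (x y : ℝ) : ℝ :=
  (116 + 784 * x + 2084 * x ^ 2 + 2728 * x ^ 3 + 1760 * x ^ 4 + 448 * x ^ 5) +
  (207 + 1113 * x + 2214 * x ^ 2 + 1932 * x ^ 3 + 624 * x ^ 4) * y +
  (147 + 594 * x + 792 * x ^ 2 + 348 * x ^ 3) * y ^ 2 +
  (48 + 132 * x + 90 * x ^ 2) * y ^ 3 +
  (6 + 9 * x) * y ^ 4

/-- Numerator of the rational part of the certificate. -/
noncomputable def rationalNum (x y : ℝ) : ℝ :=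
  (104 + 824 * x + 2680 * x ^ 2 + 4584 * x ^ 3 + 4352 * x ^ 4 + 2176 * x ^ 5 + 448 * x ^ 6) +
  (329 + 2322 * x + 6617 * x ^ 2 + 9712 * x ^ 3 + 7696 * x ^ 4 + 3088 * x ^ 5 + 480 * x ^ 6) * y +
  (423 + 2554 * x + 6003 * x ^ 2 + 6860 * x ^ 3 + 3804 * x ^ 4 + 816 * x ^ 5) * y ^ 2 +
  (288 + 1422 * x + 2565 * x ^ 2 + 2004 * x ^ 3 + 572 * x ^ 4) * y ^ 3 +
  (111 + 422 * x + 520 * x ^ 2 + 208 * x ^ 3) * y ^ 4 +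
  (23 + 61 * x + 39 * x ^ 2) * y ^ 5 +
  (2 + 3 * x) * y ^ 6

/-- The certificate multiplying `harmonicDiff`. -/
noncomputable def harmonicCert (x y : ℝ) : ℝ :=
  harmonicNum x y / (6 * (3 * x + 1) * (3 * x + 2) * (2 * x + y + 2) ^ 3)

/-- The rational part of the certificate. -/
noncomputable def rationalCert (x y : ℝ) : ℝ :=
  -rationalNum x y /
    (6 * (3 * x + 1) * (3 * x + 2) * ((2 * x + y + 2) ^ 4 * (2 * x + y + 1) * (x + y + 1)))

/-- First member of the Wilf–Zeilberger pair. -/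
noncomputable def wzF (n k : ℕ) : ℝ :=
  weight n * betaValue n k ^ 3 *
    (harmonicDiff n k + (1 / (2 * ((n : ℝ) + k + 1)) - 1 / (2 * (n : ℝ) + k + 1)))

/-- Second member of the Wilf–Zeilberger pair. -/
noncomputable def wzG (n k : ℕ) : ℝ :=
  weight n * betaValue n k ^ 3 * (harmonicCert n k * harmonicDiff n k + rationalCert n k)

lemma risingFactorial_pos {a : ℝ} (ha : 0 < a) (n : ℕ) : 0 < risingFactorial a n :=
  Finset.prod_pos fun i _ => by positivity

lemma risingFactorial_succ (a : ℝ) (n : ℕ) :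
    risingFactorial a (n + 1) = risingFactorial a n * (a + n) :=
  Finset.prod_range_succ _ _

lemma weight_zero : weight 0 = 1 := by simp [weight, risingFactorial]

lemma weight_succ (n : ℕ) :
    weight (n + 1) =
      weight n * (-((n : ℝ) + 1) ^ 2 / (3 * (3 * (n : ℝ) + 1) * (3 * (n : ℝ) + 2))) := by
  have h₁ := (risingFactorial_pos (a := 1 / 3) (by norm_num) n).ne'
  have h₂ := (risingFactorial_pos (a := 2 / 3) (by norm_num) n).ne'
  simp only [weight, risingFactorial_succ, pow_succ]
  have h₃ : (1 / 3 + (n : ℝ)) = (3 * n + 1) / 3 := by ring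
  have h₄ : (2 / 3 + (n : ℝ)) = (3 * n + 2) / 3 := by ring
  have h₅ : (3 * (n : ℝ) + 1) ≠ 0 := by positivity
  have h₆ : (3 * (n : ℝ) + 2) ≠ 0 := by positivity
  rw [h₃, h₄]
  field_simp
  ring

lemma abs_weight_le (n : ℕ) : |weight n| ≤ (1 / 2) ^ n := by
  induction n with
  | zero => simp [weight_zero]
  | succ n ih =>
    rw [weight_succ, abs_mul, pow_succ (1 / 2 : ℝ) n]
    refine mul_le_mul ih ?_ (abs_nonneg _) (by positivity)
    rw [neg_div, abs_neg, abs_of_nonneg (by positivity), div_le_div_iff₀ (by positivity) two_pos]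
    nlinarith [(Nat.cast_nonneg n : (0 : ℝ) ≤ n)]

lemma betaValue_nonneg (n k : ℕ) : 0 ≤ betaValue n k := by
  unfold betaValue
  positivity

lemma betaValue_zero_right (n : ℕ) : betaValue n 0 = 1 / (2 * (n : ℝ) + 1) := by
  have h : ((2 * n).factorial : ℝ) ≠ 0 := by positivity
  have h' : (2 * (n : ℝ) + 1) ≠ 0 := by positivity
  simp only [betaValue, add_zero, Nat.factorial_succ]
  push_cast
  field_simp
  simp

lemma betaValue_succ_right (n k : ℕ) :
    betaValue n (k + 1) = betaValue n k * (((k : ℝ) + 1) / (2 * (n : ℝ) + k + 2)) := by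
  have h : ((2 * n + k + 1).factorial : ℝ) ≠ 0 := by positivity
  have h' : (2 * (n : ℝ) + k + 2) ≠ 0 := by positivity
  have h'' : (2 * (n : ℝ) + (k + 1) + 1) ≠ 0 := by positivity
  simp only [betaValue, ← add_assoc, Nat.factorial_succ (2 * n + k + 1), Nat.factorial_succ k]
  push_cast
  field_simp
  ring

lemma betaValue_succ_left (n k : ℕ) :
    betaValue (n + 1) k = betaValue n k *
      ((2 * (n : ℝ) + 1) * (2 * (n : ℝ) + 2) /
        ((2 * (n : ℝ) + k + 2) * (2 * (n : ℝ) + k + 3))) := by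
  induction k with
  | zero =>
    rw [betaValue_zero_right, betaValue_zero_right]
    push_cast
    field_simp
    ring
  | succ k ih =>
    rw [betaValue_succ_right, betaValue_succ_right, ih]
    push_cast
    field_simp
    ring

lemma betaValue_le (n k : ℕ) : betaValue n k ≤ 1 / ((k : ℝ) + 1) := by
  induction k with
  | zero =>
    rw [betaValue_zero_right]
    gcongr
    simp
  | succ k ih =>
    rw [betaValue_succ_right]
    calc betaValue n k * (((k : ℝ) + 1) / (2 * (n : ℝ) + k + 2))
        ≤ 1 / ((k : ℝ) + 1) * (((k : ℝ) + 1) / (k + 2)) := by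
          gcongr
          linarith [(Nat.cast_nonneg n : (0 : ℝ) ≤ n)]
      _ = 1 / (((k + 1 : ℕ) : ℝ) + 1) := by
          push_cast
          field_simp
          ring

lemma betaValue_zero_left (k : ℕ) : betaValue 0 k = 1 / ((k : ℝ) + 1) := by
  have h : (k.factorial : ℝ) ≠ 0 := by positivity
  simp only [betaValue, mul_zero, zero_add, Nat.factorial_zero, Nat.factorial_succ]
  push_cast
  field_simp

lemma harmonicDiff_succ_right (n k : ℕ) :
    harmonicDiff n (k + 1) =
      harmonicDiff n k + (1 / ((n : ℝ) + k + 1) - 1 / (2 * (n : ℝ) + k + 1)) :=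
  Finset.sum_range_succ _ _

lemma harmonicDiff_succ_left (n k : ℕ) :
    harmonicDiff (n + 1) k = harmonicDiff n k +
      (1 / ((n : ℝ) + k + 1) - 1 / ((n : ℝ) + 1) - 1 / (2 * (n : ℝ) + k + 1)
        - 1 / (2 * (n : ℝ) + k + 2) + 1 / (2 * (n : ℝ) + 1) + 1 / (2 * (n : ℝ) + 2)) := by
  induction k with
  | zero =>
    simp only [harmonicDiff, Finset.range_zero, Finset.sum_empty, Nat.cast_zero]
    ring
  | succ k ih =>
    rw [harmonicDiff_succ_right, harmonicDiff_succ_right, ih]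
    push_cast
    have h₁ : (n : ℝ) + 1 + k + 1 = n + (k + 1) + 1 := by ring
    have h₂ : 2 * ((n : ℝ) + 1) + k + 1 = 2 * n + (k + 1) + 2 := by ring
    have h₃ : 2 * (n : ℝ) + k + 2 = 2 * n + (k + 1) + 1 := by ring
    rw [h₁, h₂, h₃]
    ring

lemma harmonicDiff_zero_left (k : ℕ) : harmonicDiff 0 k = 0 := by simp [harmonicDiff]

lemma abs_harmonicDiff_le (n k : ℕ) : |harmonicDiff n k| ≤ k := by
  refine (Finset.abs_sum_le_sum_abs _ _).trans ?_
  calc ∑ i ∈ Finset.range k, |1 / ((n : ℝ) + i + 1) - 1 / (2 * (n : ℝ) + i + 1)|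
      ≤ ∑ _i ∈ Finset.range k, (1 : ℝ) := by
        refine Finset.sum_le_sum fun i _ => ?_
        have hn : (0 : ℝ) ≤ n := n.cast_nonneg
        have hi : (0 : ℝ) ≤ i := i.cast_nonneg
        refine abs_sub_le_of_nonneg_of_le (by positivity) ?_ (by positivity) ?_ <;>
        · rw [div_le_one (by positivity)]
          linarith
    _ = k := by simp

lemma harmonicCert_telescope {x y : ℝ} (hx : 0 ≤ x) (hy : 0 ≤ y) :
    -(x + 1) ^ 2 / (3 * (3 * x + 1) * (3 * x + 2)) *
        ((2 * x + 1) * (2 * x + 2) / ((2 * x + y + 2) * (2 * x + y + 3))) ^ 3 - 1 =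
      ((y + 1) / (2 * x + y + 2)) ^ 3 * harmonicCert x (y + 1) - harmonicCert x y := by
  have h : 2 * x + (y + 1) + 2 = 2 * x + y + 3 := by ring
  unfold harmonicCert harmonicNum
  rw [h]
  field_simp
  ring

lemma rationalCert_telescope {x y : ℝ} (hx : 0 ≤ x) (hy : 0 ≤ y) :
    -(x + 1) ^ 2 / (3 * (3 * x + 1) * (3 * x + 2)) *
        ((2 * x + 1) * (2 * x + 2) / ((2 * x + y + 2) * (2 * x + y + 3))) ^ 3 *
        ((1 / (x + y + 1) - 1 / (x + 1) - 1 / (2 * x + y + 1) - 1 / (2 * x + y + 2)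
          + 1 / (2 * x + 1) + 1 / (2 * x + 2)) +
          (1 / (2 * (x + y + 2)) - 1 / (2 * x + y + 3))) -
        (1 / (2 * (x + y + 1)) - 1 / (2 * x + y + 1)) =
      ((y + 1) / (2 * x + y + 2)) ^ 3 *
        (harmonicCert x (y + 1) * (1 / (x + y + 1) - 1 / (2 * x + y + 1)) +
          rationalCert x (y + 1)) - rationalCert x y := by
  have h₁ : 2 * x + (y + 1) + 2 = 2 * x + y + 3 := by ring
  have h₂ : 2 * x + (y + 1) + 1 = 2 * x + y + 2 := by ring
  have h₃ : x + (y + 1) + 1 = x + y + 2 := by ring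
  have h₄ : 2 * x + 2 = 2 * (x + 1) := by ring
  unfold harmonicCert rationalCert harmonicNum rationalNum
  rw [h₁, h₂, h₃, h₄]
  field_simp
  ring

lemma wz_equation (n k : ℕ) :
    wzF (n + 1) k - wzF n k = wzG n (k + 1) - wzG n k := by
  have hx : (0 : ℝ) ≤ n := n.cast_nonneg
  have hy : (0 : ℝ) ≤ k := k.cast_nonneg
  have h₁ := harmonicCert_telescope hx hy
  have h₂ := rationalCert_telescope hx hy
  have e₁ : (n : ℝ) + 1 + k + 1 = n + k + 2 := by ring
  have e₂ : 2 * ((n : ℝ) + 1) + k + 1 = 2 * n + k + 3 := by ring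
  unfold wzF wzG
  rw [weight_succ, betaValue_succ_left, betaValue_succ_right, harmonicDiff_succ_left,
    harmonicDiff_succ_right]
  push_cast
  rw [e₁, e₂]
  linear_combination weight n * betaValue n k ^ 3 * (harmonicDiff n k * h₁ + h₂)

lemma betaValue_pow_three_le (n k : ℕ) : betaValue n k ^ 3 ≤ 1 / ((k : ℝ) + 1) ^ 3 := by
  rw [← one_div_pow]
  exact pow_le_pow_left₀ (betaValue_nonneg n k) (betaValue_le n k) 3

lemma abs_wzF_le (n k : ℕ) : |wzF n k| ≤ (1 / 2) ^ n * (2 * (1 / ((k : ℝ) + 1) ^ 2)) := by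
  have hx : (0 : ℝ) ≤ n := n.cast_nonneg
  have hy : (0 : ℝ) ≤ k := k.cast_nonneg
  have h : |1 / (2 * ((n : ℝ) + k + 1)) - 1 / (2 * (n : ℝ) + k + 1)| ≤ 1 := by
    refine abs_sub_le_of_nonneg_of_le (by positivity) ?_ (by positivity) ?_ <;>
    · rw [div_le_one (by positivity)]
      linarith
  have h' : |harmonicDiff n k + (1 / (2 * ((n : ℝ) + k + 1)) - 1 / (2 * (n : ℝ) + k + 1))|
      ≤ (k : ℝ) + 1 :=
    (abs_add_le _ _).trans (add_le_add (abs_harmonicDiff_le n k) h)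
  rw [wzF, abs_mul, abs_mul, abs_of_nonneg (pow_nonneg (betaValue_nonneg n k) 3)]
  calc _ ≤ (1 / 2) ^ n * (1 / ((k : ℝ) + 1) ^ 3) * ((k : ℝ) + 1) := by
        gcongr
        · exact pow_nonneg (betaValue_nonneg n k) 3
        · exact abs_weight_le n
        · exact betaValue_pow_three_le n k
    _ = (1 / 2) ^ n * (1 / ((k : ℝ) + 1) ^ 2) := by field_simp
    _ ≤ _ := by
        gcongr
        linarith [show 0 ≤ 1 / ((k : ℝ) + 1) ^ 2 by positivity]

lemma harmonicCert_nonneg {x y : ℝ} (hx : 0 ≤ x) (hy : 0 ≤ y) : 0 ≤ harmonicCert x y := by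
  unfold harmonicCert harmonicNum
  positivity

lemma pow_le_add_one_pow {y : ℝ} (hy : 0 ≤ y) {i m : ℕ} (h : i ≤ m) : y ^ i ≤ (y + 1) ^ m :=
  (pow_le_pow_left₀ hy (by linarith) i).trans (pow_le_pow_right₀ (by linarith) h)

lemma quartic_le {a b c d e y : ℝ} (hy : 0 ≤ y) (ha : 0 ≤ a) (hb : 0 ≤ b) (hc : 0 ≤ c)
    (hd : 0 ≤ d) (he : 0 ≤ e) :
    a + b * y + c * y ^ 2 + d * y ^ 3 + e * y ^ 4 ≤
      (a + b * 1 + c * 1 ^ 2 + d * 1 ^ 3 + e * 1 ^ 4) * (y + 1) ^ 4 := by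
  have h (i : ℕ) (hi : i ≤ 4) := pow_le_add_one_pow hy hi
  linear_combination a * h 0 (by simp) + b * h 1 (by simp) + c * h 2 (by simp) +
    d * h 3 (by simp) + e * h 4 (by simp)

lemma sextic_le {a b c d e f g y : ℝ} (hy : 0 ≤ y) (ha : 0 ≤ a) (hb : 0 ≤ b) (hc : 0 ≤ c)
    (hd : 0 ≤ d) (he : 0 ≤ e) (hf : 0 ≤ f) (hg : 0 ≤ g) :
    a + b * y + c * y ^ 2 + d * y ^ 3 + e * y ^ 4 + f * y ^ 5 + g * y ^ 6 ≤
      (a + b * 1 + c * 1 ^ 2 + d * 1 ^ 3 + e * 1 ^ 4 + f * 1 ^ 5 + g * 1 ^ 6) * (y + 1) ^ 6 := by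
  have h (i : ℕ) (hi : i ≤ 6) := pow_le_add_one_pow hy hi
  linear_combination a * h 0 (by simp) + b * h 1 (by simp) + c * h 2 (by simp) +
    d * h 3 (by simp) + e * h 4 (by simp) + f * h 5 (by simp) + g * h 6 (by simp)

lemma harmonicCert_le {x y : ℝ} (hx : 0 ≤ x) (hy : 0 ≤ y) :
    harmonicCert x y ≤ harmonicNum x 1 * (y + 1) := by
  have hnum : harmonicNum x y ≤ harmonicNum x 1 * (y + 1) ^ 4 := by
    exact quartic_le hy (by positivity) (by positivity) (by positivity) (by positivity)
      (by positivity)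
  have hpos : 0 ≤ harmonicNum x 1 := by
    unfold harmonicNum
    positivity
  rw [harmonicCert, div_le_iff₀ (by positivity)]
  refine hnum.trans ?_
  have hden : (y + 1) ^ 3 ≤ 6 * (3 * x + 1) * (3 * x + 2) * (2 * x + y + 2) ^ 3 := by
    have h₁ : 1 ≤ 6 * (3 * x + 1) * (3 * x + 2) := by nlinarith
    have h₂ : (y + 1) ^ 3 ≤ (2 * x + y + 2) ^ 3 := by gcongr <;> linarith
    exact h₂.trans (le_mul_of_one_le_left (by positivity) h₁)
  calc harmonicNum x 1 * (y + 1) ^ 4 = harmonicNum x 1 * (y + 1) * (y + 1) ^ 3 := by ring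
    _ ≤ _ := by gcongr

lemma abs_rationalCert_le {x y : ℝ} (hx : 0 ≤ x) (hy : 0 ≤ y) :
    |rationalCert x y| ≤ rationalNum x 1 := by
  have hnum : rationalNum x y ≤ rationalNum x 1 * (y + 1) ^ 6 :=
    sextic_le hy (by positivity) (by positivity) (by positivity) (by positivity)
      (by positivity) (by positivity) (by positivity)
  have hpos : 0 ≤ rationalNum x 1 := by
    unfold rationalNum
    positivity
  have hpos' : 0 ≤ rationalNum x y := by
    unfold rationalNum
    positivity
  rw [rationalCert, neg_div, abs_neg, abs_of_nonneg (by positivity), div_le_iff₀ (by positivity)]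
  refine hnum.trans (mul_le_mul_of_nonneg_left ?_ hpos)
  have h₁ : 1 ≤ 6 * (3 * x + 1) * (3 * x + 2) := by nlinarith
  have h₂ : (y + 1) ^ 4 * (y + 1) * (y + 1) ≤
      (2 * x + y + 2) ^ 4 * (2 * x + y + 1) * (x + y + 1) := by
    gcongr <;> linarith
  calc (y + 1) ^ 6 = (y + 1) ^ 4 * (y + 1) * (y + 1) := by ring
    _ ≤ _ := h₂.trans (le_mul_of_one_le_left (by positivity) h₁)

lemma abs_wzG_le (n k : ℕ) :
    |wzG n k| ≤ (harmonicNum n 1 + rationalNum n 1) * (1 / ((k : ℝ) + 1)) := by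
  have hx : (0 : ℝ) ≤ n := n.cast_nonneg
  have hy : (0 : ℝ) ≤ k := k.cast_nonneg
  have hw : |weight n| ≤ 1 := (abs_weight_le n).trans (pow_le_one₀ (by norm_num) (by norm_num))
  have hA : 0 ≤ harmonicNum n 1 := by
    unfold harmonicNum
    positivity
  have hB : 0 ≤ rationalNum n 1 := by
    unfold rationalNum
    positivity
  have h : |harmonicCert n k * harmonicDiff n k + rationalCert n k| ≤
      (harmonicNum n 1 + rationalNum n 1) * ((k : ℝ) + 1) ^ 2 := by
    refine (abs_add_le _ _).trans ?_
    rw [abs_mul, abs_of_nonneg (harmonicCert_nonneg hx hy), add_mul]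
    have h₁ : harmonicCert n k * |harmonicDiff n k| ≤
        (harmonicNum n 1 * ((k : ℝ) + 1)) * ((k : ℝ) + 1) := by
      gcongr
      · exact harmonicCert_le hx hy
      · exact (abs_harmonicDiff_le n k).trans (by linarith)
    have h₂ : |rationalCert n k| ≤ rationalNum n 1 * ((k : ℝ) + 1) ^ 2 :=
      (abs_rationalCert_le hx hy).trans
        (le_mul_of_one_le_right hB (one_le_pow₀ (by linarith)))
    linarith
  rw [wzG, abs_mul, abs_mul, abs_of_nonneg (pow_nonneg (betaValue_nonneg n k) 3)]
  calc _ ≤ 1 * (1 / ((k : ℝ) + 1) ^ 3) *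
        ((harmonicNum n 1 + rationalNum n 1) * ((k : ℝ) + 1) ^ 2) := by
        gcongr
        · exact pow_nonneg (betaValue_nonneg n k) 3
        · exact betaValue_pow_three_le n k
    _ = _ := by field_simp

open Filter Topology

lemma tendsto_wzG_atTop (n : ℕ) : Tendsto (wzG n) atTop (𝓝 0) := by
  refine squeeze_zero_norm (abs_wzG_le n) ?_
  simpa using tendsto_one_div_add_atTop_nhds_zero_nat.const_mul
    (harmonicNum n 1 + rationalNum n 1)

lemma summable_one_div_add_one_sq : Summable fun k : ℕ => 1 / ((k : ℝ) + 1) ^ 2 := by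
  have h := (summable_nat_add_iff 1).2 (Real.summable_one_div_nat_pow.2 one_lt_two)
  exact_mod_cast h

lemma summable_wzF (n : ℕ) : Summable (wzF n) :=
  .of_norm_bounded ((summable_one_div_add_one_sq.mul_left 2).mul_left _) (abs_wzF_le n)

lemma tsum_wzF_succ (n : ℕ) : ∑' k, wzF (n + 1) k = ∑' k, wzF n k - wzG n 0 := by
  have h₁ := ((summable_wzF (n + 1)).hasSum.sub (summable_wzF n).hasSum).tendsto_sum_nat
  simp only [wz_equation, Finset.sum_range_sub] at h₁
  have h₂ := tendsto_nhds_unique h₁ ((tendsto_wzG_atTop n).sub_const (wzG n 0))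
  linarith

lemma sum_range_wzG (N : ℕ) :
    ∑ n ∈ Finset.range N, wzG n 0 = ∑' k, wzF 0 k - ∑' k, wzF N k := by
  induction N with
  | zero => simp
  | succ N ih =>
    rw [Finset.sum_range_succ, ih, tsum_wzF_succ]
    ring

lemma tendsto_tsum_wzF : Tendsto (fun n => ∑' k, wzF n k) atTop (𝓝 0) := by
  have hs := summable_one_div_add_one_sq.mul_left 2
  refine squeeze_zero_norm (a := fun n => (1 / 2 : ℝ) ^ n * ∑' k : ℕ, 2 * (1 / ((k : ℝ) + 1) ^ 2))
    (fun n => ?_) ?_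
  · rw [← tsum_mul_left]
    exact tsum_of_norm_bounded (hs.mul_left _).hasSum (abs_wzF_le n)
  · simpa using (tendsto_pow_atTop_nhds_zero_of_lt_one (r := (1 / 2 : ℝ)) (by norm_num)
      (by norm_num)).mul_const _

lemma tsum_wzF_zero : ∑' k, wzF 0 k = -Real.pi ^ 4 / 180 := by
  have h := (hasSum_nat_add_iff' 1).2 hasSum_zeta_four
  have h' := (h.mul_left (-1 / 2)).tsum_eq
  have e : ∀ k, wzF 0 k = -1 / 2 * (1 / ((k + 1 : ℕ) : ℝ) ^ 4) := fun k => by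
    rw [wzF, weight_zero, betaValue_zero_left, harmonicDiff_zero_left]
    push_cast
    field_simp
    ring
  rw [tsum_congr e, h']
  simp
  ring

lemma four_mul_wzG_zero (n : ℕ) :
    4 * wzG n 0 = weight (n + 1) *
      ((3 - 18 * ((n : ℝ) + 1) + 28 * ((n : ℝ) + 1) ^ 2) /
        (((n : ℝ) + 1) ^ 4 * (2 * ((n : ℝ) + 1) - 1) ^ 3)) := by
  have e₁ : 2 * ((n : ℝ) + 1) - 1 = 2 * n + 1 := by ring
  rw [wzG, betaValue_zero_right, weight_succ, e₁]
  simp only [rationalCert, rationalNum, harmonicDiff, Finset.range_zero, Finset.sum_empty,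
    Nat.cast_zero, add_zero]
  field_simp
  ring

lemma summable_wzG_zero : Summable fun n => wzG n 0 := by
  refine .of_norm_bounded (g := fun n : ℕ => 7 * (1 / 2 : ℝ) ^ (n + 1))
    (((summable_nat_add_iff 1).2 summable_geometric_two).mul_left _) fun n => ?_
  have hn : (0 : ℝ) ≤ n := n.cast_nonneg
  have e : 2 * ((n : ℝ) + 1) - 1 = 2 * n + 1 := by ring
  have hr : |(3 - 18 * ((n : ℝ) + 1) + 28 * ((n : ℝ) + 1) ^ 2) /
      (((n : ℝ) + 1) ^ 4 * (2 * ((n : ℝ) + 1) - 1) ^ 3)| ≤ 28 := by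
    have hnum : 0 ≤ 3 - 18 * ((n : ℝ) + 1) + 28 * ((n : ℝ) + 1) ^ 2 := by nlinarith
    rw [e, abs_of_nonneg (by positivity), div_le_iff₀ (by positivity)]
    have h₁ : ((n : ℝ) + 1) ^ 2 ≤ ((n : ℝ) + 1) ^ 4 :=
      pow_le_pow_right₀ (by linarith) (by norm_num)
    have h₂ : 1 ≤ (2 * (n : ℝ) + 1) ^ 3 := one_le_pow₀ (by linarith)
    have h₃ : ((n : ℝ) + 1) ^ 4 ≤ ((n : ℝ) + 1) ^ 4 * (2 * (n : ℝ) + 1) ^ 3 :=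
      le_mul_of_one_le_right (by positivity) h₂
    linarith
  have h := mul_le_mul (abs_weight_le (n + 1)) hr (abs_nonneg _) (by positivity)
  rw [← abs_mul, ← four_mul_wzG_zero, abs_mul, abs_of_pos (by norm_num : (0 : ℝ) < 4)] at h
  rw [Real.norm_eq_abs]
  linarith

lemma hasSum_wzG_zero : HasSum (fun n => wzG n 0) (-Real.pi ^ 4 / 180) := by
  refine (summable_wzG_zero.hasSum_iff_tendsto_nat).2 ?_
  simp only [sum_range_wzG, tsum_wzF_zero]
  simpa using tendsto_tsum_wzF.const_sub (-Real.pi ^ 4 / 180)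

end PiFourSeries

/-- `∑_{n≥1} (−1/27)^n (1)ₙ²/((1/3)ₙ(2/3)ₙ) (3−18n+28n²)/(n⁴(2n−1)³) = −π⁴/45`. -/
theorem pi4_45_series :
    ∑' n : ℕ, ((-1 / 27 : ℝ) ^ (n + 1) * (risingFactorial 1 (n + 1)) ^ 2 /
        (risingFactorial (1 / 3) (n + 1) * risingFactorial (2 / 3) (n + 1)) *
        ((3 - 18 * ((n : ℝ) + 1) + 28 * ((n : ℝ) + 1) ^ 2) /
          (((n : ℝ) + 1) ^ 4 * (2 * ((n : ℝ) + 1) - 1) ^ 3)))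
      = -Real.pi ^ 4 / 45 := by
  refine Eq.trans (tsum_congr fun n => (PiFourSeries.four_mul_wzG_zero n).symm) ?_
  rw [tsum_mul_left, PiFourSeries.hasSum_wzG_zero.tsum_eq]
  ring
end
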